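/- Let 1 ≤ p < ∞, let B_w be a bounded weighted backward shift on ℓ^p(ℕ), and let Λ be a subset of (0,+∞) with at least two elements. Assume λ_w = r_{p,w}, where λ_w := limsup_{n→∞} |w_1 ⋯ w_n|^{1/n} and r_{p,w}^{−1} := limsup_{n→∞} |w_1 ⋯ w_n|^{−1/n}. Then ⋂_{λ∈Λ} FHC(λB_w) ≠ ∅ if and only if Λ is countable and relatively compact in (r_{p,w}^{−1}, +∞). -/

import Mathlib

open Filter Topology
open scoped ENNReal NNReal

/-- Lower density of a set of natural numbers. -/
noncomputable def lowerDensity (E : Set ℕ) : ℝ :=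
  Filter.liminf (fun n : ℕ =>
    (∑ k ∈ Finset.range (n + 1), Set.indicator E (fun _ => (1 : ℝ)) k) / ((n : ℝ) + 1))
    Filter.atTop

/-- The set of frequently hypercyclic vectors of an operator. -/
noncomputable def FHC {X : Type*} [NormedAddCommGroup X] [NormedSpace ℂ X]
    (T : X →L[ℂ] X) : Set X :=
  {x | ∀ U : Set X, IsOpen U → U.Nonempty → 0 < lowerDensity {n : ℕ | (T ^ n) x ∈ U}}

/-- `λ_w = limsup_n |w₁⋯w_n|^{1/n}`, computed in `ℝ≥0∞`. -/
noncomputable def lamw (w : ℕ → ℂ) : ℝ≥0∞ :=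
  Filter.limsup
    (fun n : ℕ => (∏ k ∈ Finset.Icc 1 n, (‖w k‖₊ : ℝ≥0∞)) ^ (1 / (n : ℝ)))
    Filter.atTop

/-- `r_{p,w}⁻¹ = limsup_n |w₁⋯w_n|^{-1/n}`, computed in `ℝ≥0∞`. -/
noncomputable def rpwInv (w : ℕ → ℂ) : ℝ≥0∞ :=
  Filter.limsup
    (fun n : ℕ => ((∏ k ∈ Finset.Icc 1 n, (‖w k‖₊ : ℝ≥0∞))⁻¹) ^ (1 / (n : ℝ)))
    Filter.atTop

/-!
*Necessity.* Let `x` be a common frequently hypercyclic vector and let `E a` be the set of times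
`n` at which `(a B) ^ n x` lies in the unit ball around `2 e₀`. For `n ∈ E a`, `m ∈ E b` and
`m ≤ n`, comparing the `n`-th coordinate of `x` seen at the two times gives
`b ^ m ≤ 3 a ^ n |w₁ ⋯ w_{n - m}|`. With `m = n` this makes the sets `E a` almost disjoint, and only
countably many almost disjoint sets can have positive lower density. Positive lower density also
provides such pairs with `m → ∞` and `n ≤ κ m`, where `κ` depends on one of the two sets only. If
`κ` depends on `E a`, this bounds `b`; if it depends on `E b`, it yields
`b ≤ a max(a λ_w, 1) ^ κ` for all `a ∈ Λ`, hence for all `a ∈ closure Λ`, so that `a < b` forces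
`a λ_w > 1`.

*Sufficiency.* Choose disjoint sets `A i` of positive lower density, indexed by triples of a
multiple, a vector and a precision, and let `x` be the sum, over `i` and `n ∈ A i`, of
preimages of the `i`-th vector under the `n`-th power of the `i`-th multiple. Backward orbits decay
geometrically, but an operator `μ B` applied `m` times to a preimage under `(λ B) ^ n` brings in
the factor `(μ / λ) ^ m`, which for `μ > λ` is only compensated if `L m ≤ n` for a large constant
`L`. So the sets `A i` are placed in the dilates by powers of a large `T` of small intervals in
`[1, 2)` that are ordered like their indices: `m ∈ A i` precedes `n ∈ A j` with `j < i` only if `n`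
lies in a later dilate, and then `L m ≤ n`.
-/

section LowerDensity

open scoped Classical in
theorem lowerDensity_eq_liminf_count (E : Set ℕ) :
    lowerDensity E = liminf (fun n : ℕ ↦ (Nat.count (· ∈ E) n : ℝ) / n) atTop := by
  rw [lowerDensity, ← liminf_nat_add (fun n : ℕ ↦ (Nat.count (· ∈ E) n : ℝ) / n) 1]
  refine congrArg (liminf · atTop) (funext fun n ↦ ?_)
  simp only [Nat.count_eq_card_filter_range, Finset.natCast_card_filter, Set.indicator_apply,
    Nat.cast_add, Nat.cast_one]

open scoped Classical in
theorem lowerDensity_pos_iff {E : Set ℕ} :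
    0 < lowerDensity E ↔ ∃ K : ℕ, ∀ᶠ n in atTop, n ≤ K * Nat.count (· ∈ E) n := by
  rw [lowerDensity_eq_liminf_count]
  constructor
  · intro h
    obtain ⟨c, hc0, hc⟩ := exists_between h
    obtain ⟨K, hK⟩ := exists_nat_gt (1 / c)
    have hbdd : IsBoundedUnder (· ≥ ·) atTop fun n : ℕ ↦ (Nat.count (· ∈ E) n : ℝ) / n :=
      isBoundedUnder_of ⟨0, fun n ↦ by positivity⟩
    refine ⟨K, ?_⟩
    filter_upwards [eventually_lt_of_lt_liminf hc hbdd, eventually_gt_atTop 0] with n hn hn0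
    have hn0' : (0 : ℝ) < n := by exact_mod_cast hn0
    rw [lt_div_iff₀ hn0'] at hn
    rw [div_lt_iff₀ hc0] at hK
    suffices (n : ℝ) ≤ K * Nat.count (· ∈ E) n by exact_mod_cast this
    calc (n : ℝ) ≤ K * c * n := le_mul_of_one_le_left hn0'.le hK.le
      _ = K * (c * n) := mul_assoc ..
      _ ≤ K * Nat.count (· ∈ E) n := by gcongr
  · rintro ⟨K, hK⟩
    have hcobdd : IsCoboundedUnder (· ≥ ·) atTop fun n : ℕ ↦ (Nat.count (· ∈ E) n : ℝ) / n :=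
      (isBoundedUnder_of ⟨1, fun n ↦ div_le_one_of_le₀ (mod_cast Nat.count_le _)
        n.cast_nonneg⟩ : IsBoundedUnder (· ≤ ·) atTop _).isCoboundedUnder_ge
    refine lt_of_lt_of_le (b := 1 / ((K : ℝ) + 1)) (by positivity) (le_liminf_of_le hcobdd ?_)
    filter_upwards [hK, eventually_gt_atTop 0] with n hn hn0
    rw [div_le_div_iff₀ (by positivity) (by exact_mod_cast hn0)]
    have hn' : (n : ℝ) ≤ K * Nat.count (· ∈ E) n := by exact_mod_cast hn
    linarith [(Nat.count (· ∈ E) n).cast_nonneg (α := ℝ)]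

theorem lowerDensity_pos_mono {E F : Set ℕ} (hEF : E ⊆ F) (hE : 0 < lowerDensity E) :
    0 < lowerDensity F := by
  classical
  rw [lowerDensity_pos_iff] at hE ⊢
  obtain ⟨K, hK⟩ := hE
  refine ⟨K, hK.mono fun n hn ↦ hn.trans ?_⟩
  gcongr with k

theorem lowerDensity_image_mul_pos {E : Set ℕ} {N : ℕ} (hN : 0 < N) (hE : 0 < lowerDensity E) :
    0 < lowerDensity ((N * ·) '' E) := by
  classical
  rw [lowerDensity_pos_iff] at hE ⊢
  obtain ⟨K, hK⟩ := hE
  refine ⟨2 * N * K, ?_⟩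
  filter_upwards [(Nat.tendsto_div_const_atTop hN.ne').eventually hK, eventually_ge_atTop N]
    with n hn hNn
  have hcount : Nat.count (· ∈ E) (n / N) ≤ Nat.count (· ∈ (N * ·) '' E) n := by
    rw [Nat.count_eq_card_filter_range, Nat.count_eq_card_filter_range]
    refine Finset.card_le_card_of_injOn (N * ·) (fun k hk ↦ ?_)
      (mul_right_injective₀ hN.ne').injOn
    simp only [Finset.coe_filter, Finset.mem_range, Set.mem_ofPred_eq] at hk ⊢
    exact ⟨(Nat.mul_lt_mul_of_pos_left hk.1 hN).trans_le (Nat.mul_div_le n N),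
      Set.mem_image_of_mem _ hk.2⟩
  have hdiv : n ≤ 2 * N * (n / N) := by
    have := Nat.lt_mul_div_succ n hN
    have := Nat.mul_le_mul_left N (Nat.div_pos hNn hN)
    linarith
  calc n ≤ 2 * N * (n / N) := hdiv
    _ ≤ 2 * N * (K * Nat.count (· ∈ (N * ·) '' E) n) := by gcongr; exact hn.trans (by gcongr)
    _ = 2 * N * K * Nat.count (· ∈ (N * ·) '' E) n := by ring

theorem sub_sub_one_le_ceil_sub_ceil {a : ℝ} (ha : 0 ≤ a) (b : ℝ) :
    b - a - 1 ≤ (⌈b⌉₊ - ⌈a⌉₊ : ℕ) := by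
  have hsub : (⌈b⌉₊ : ℝ) ≤ (⌈b⌉₊ - ⌈a⌉₊ : ℕ) + ⌈a⌉₊ := mod_cast le_tsub_add
  linarith [Nat.le_ceil b, Nat.ceil_lt_add_one ha]

theorem lowerDensity_setOf_exists_mem_Ico_pow_pos {T a b : ℝ} (hT : 1 < T) (ha : 0 ≤ a)
    (hab : a < b) (k₀ : ℕ) : 0 < lowerDensity {n | ∃ k ≥ k₀, T ^ k * a ≤ n ∧ n < T ^ k * b} := by
  classical
  have hb : 0 < b := ha.trans_lt hab
  obtain ⟨K, hK⟩ := exists_nat_ge (2 * T * b / (b - a))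
  obtain ⟨k₁, hk₁⟩ := pow_unbounded_of_one_lt (2 / (b - a)) hT
  rw [div_lt_iff₀ (sub_pos.2 hab)] at hk₁
  rw [div_le_iff₀ (sub_pos.2 hab)] at hK
  refine lowerDensity_pos_iff.2 ⟨K, ?_⟩
  filter_upwards [tendsto_natCast_atTop_atTop.eventually_ge_atTop (T ^ (k₀ + k₁) * b)] with n hn
  have hnb : T ^ (k₀ + k₁) ≤ n / b := (le_div_iff₀ hb).2 hn
  obtain ⟨k, hkn, hnk⟩ := exists_nat_pow_near ((one_le_pow₀ hT.le).trans hnb) hT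
  have hk : k₀ + k₁ ≤ k := Nat.lt_succ_iff.1 ((pow_lt_pow_iff_right₀ hT).1 (hnb.trans_lt hnk))
  rw [le_div_iff₀ hb] at hkn
  rw [div_lt_iff₀ hb] at hnk
  have hblock : T ^ k * (b - a) - 1 ≤ (⌈T ^ k * b⌉₊ - ⌈T ^ k * a⌉₊ : ℕ) := by
    rw [mul_sub]
    exact sub_sub_one_le_ceil_sub_ceil (by positivity) _
  have hcount : ⌈T ^ k * b⌉₊ - ⌈T ^ k * a⌉₊ ≤
      Nat.count (· ∈ {n : ℕ | ∃ k ≥ k₀, T ^ k * a ≤ n ∧ n < T ^ k * b}) n := by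
    rw [Nat.count_eq_card_filter_range, ← Nat.card_Ico]
    refine Finset.card_le_card fun j hj ↦ ?_
    rw [Finset.mem_Ico, Nat.ceil_le, Nat.lt_ceil] at hj
    exact Finset.mem_filter.2 ⟨Finset.mem_range.2 (mod_cast hj.2.trans_le hkn),
      k, by omega, hj.1, hj.2⟩
  have hlarge : 2 ≤ T ^ k * (b - a) :=
    hk₁.le.trans (by gcongr; exacts [hT.le, by omega])
  suffices (n : ℝ) ≤ K * (⌈T ^ k * b⌉₊ - ⌈T ^ k * a⌉₊ : ℕ) by
    exact (Nat.cast_le.1 (by exact_mod_cast this)).trans (Nat.mul_le_mul_left K hcount)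
  calc (n : ℝ) ≤ T ^ k * (2 * T * b) / 2 := by rw [pow_succ] at hnk; linarith
    _ ≤ T ^ k * (K * (b - a)) / 2 := by gcongr
    _ = K * (T ^ k * (b - a) / 2) := by ring
    _ ≤ K * (⌈T ^ k * b⌉₊ - ⌈T ^ k * a⌉₊ : ℕ) := by gcongr; linarith

theorem exists_mem_Icc_mul_of_lowerDensity_pos {E : Set ℕ} (hE : 0 < lowerDensity E) :
    ∃ K : ℕ, ∀ᶠ m in atTop, ∃ n ∈ E, m ≤ n ∧ n ≤ K * m := by
  classical
  obtain ⟨K, hK⟩ := lowerDensity_pos_iff.1 hE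
  obtain ⟨M, hM⟩ := eventually_atTop.1 hK
  refine ⟨K, (eventually_ge_atTop M).mono fun m hm ↦ ?_⟩
  have hKm : K * m + 1 ≤ K * Nat.count (· ∈ E) (K * m + 1) := by
    refine hM _ ?_
    rcases K.eq_zero_or_pos with rfl | hK0
    · have := hM (M + 1) (by omega)
      omega
    · nlinarith
  have hcount : Nat.count (· ∈ E) m < Nat.count (· ∈ E) (K * m + 1) :=
    (Nat.count_le _).trans_lt (Nat.lt_of_mul_lt_mul_left (a := K) (by omega))
  obtain ⟨n, hn, hnE⟩ := Nat.exists_of_count_lt_count hcount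
  exact ⟨n, hnE, hn.1, Nat.lt_succ_iff.1 hn.2⟩

theorem infinite_of_lowerDensity_pos {E : Set ℕ} (hE : 0 < lowerDensity E) : E.Infinite := by
  obtain ⟨K, hK⟩ := exists_mem_Icc_mul_of_lowerDensity_pos hE
  refine Set.infinite_of_forall_exists_gt fun N ↦ ?_
  obtain ⟨m, ⟨n, hnE, hmn, -⟩, hNm⟩ := (hK.and (eventually_gt_atTop N)).exists
  exact ⟨n, hnE, hNm.trans_le hmn⟩

theorem exists_mem_le_mul_of_lowerDensity_pos {E : Set ℕ} (hE : 0 < lowerDensity E) :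
    ∃ K : ℕ, ∀ᶠ n in atTop, ∃ m ∈ E, m ≤ n ∧ n ≤ K * m := by
  classical
  obtain ⟨K, hK⟩ := lowerDensity_pos_iff.1 hE
  refine ⟨2 * K, ?_⟩
  filter_upwards [hK, eventually_gt_atTop (2 * K)] with n hn hKn
  have hK0 : 0 < K := Nat.pos_of_ne_zero (by rintro rfl; omega)
  have hcount : Nat.count (· ∈ E) (n / (2 * K) + 1) < Nat.count (· ∈ E) n := by
    refine (Nat.count_le _).trans_lt (Nat.lt_of_mul_lt_mul_left (a := K) (lt_of_lt_of_le ?_ hn))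
    have := Nat.mul_div_le n (2 * K)
    linarith
  obtain ⟨m, hm, hmE⟩ := Nat.exists_of_count_lt_count hcount
  refine ⟨m, hmE, hm.2.le, ?_⟩
  exact (Nat.lt_mul_div_succ n (by omega)).le.trans (Nat.mul_le_mul_left _ hm.1)

open scoped Classical in
theorem exists_sum_count_le_of_pairwise_finite_inter {ι : Type*} {F : Finset ι} {E : ι → Set ℕ}
    (hE : (F : Set ι).Pairwise fun i j ↦ (E i ∩ E j).Finite) :
    ∃ C, ∀ n, ∑ i ∈ F, Nat.count (· ∈ E i) n ≤ n + C := by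
  have hdisj : ∀ᶠ k : ℕ in cofinite, ∀ i ∈ F, ∀ j ∈ F, i ≠ j → k ∉ E i ∩ E j :=
    (eventually_all_finset F).2 fun i hi ↦ (eventually_all_finset F).2 fun j hj ↦
      eventually_imp_distrib_left.2 fun hij ↦ (hE hi hj hij).eventually_cofinite_notMem
  rw [Nat.cofinite_eq_atTop] at hdisj
  obtain ⟨N, hN⟩ := eventually_atTop.1 hdisj
  refine ⟨∑ i ∈ F, Nat.count (· ∈ E i) N, fun n ↦ ?_⟩
  rcases le_total n N with hn | hn
  · exact (Finset.sum_le_sum fun i _ ↦ Nat.count_monotone _ hn).trans (Nat.le_add_left ..)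
  · induction n, hn using Nat.le_induction with
    | base => exact Nat.le_add_left ..
    | succ k hk ih =>
      have hk1 : (F.filter (k ∈ E ·)).card ≤ 1 := Finset.card_le_one.2 fun i hi j hj ↦ by
        rw [Finset.mem_filter] at hi hj
        exact not_not.1 fun hij ↦ hN k hk i hi.1 j hj.1 hij ⟨hi.2, hj.2⟩
      simp only [Nat.count_succ, Finset.sum_add_distrib, ← Finset.card_filter]
      linarith

theorem countable_of_lowerDensity_pos {ι : Type*} {s : Set ι} {E : ι → Set ℕ}
    (hpos : ∀ i ∈ s, 0 < lowerDensity (E i))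
    (hE : s.Pairwise fun i j ↦ (E i ∩ E j).Finite) : s.Countable := by
  classical
  have hcover : s ⊆ ⋃ K : ℕ, {i ∈ s | ∀ᶠ n in atTop, n ≤ K * Nat.count (· ∈ E i) n} := by
    intro i hi
    obtain ⟨K, hK⟩ := lowerDensity_pos_iff.1 (hpos i hi)
    exact Set.mem_iUnion.2 ⟨K, hi, hK⟩
  refine (Set.countable_iUnion fun K ↦ Set.Finite.countable ?_).mono hcover
  by_contra hinf
  obtain ⟨F, hFs, hFcard⟩ := Set.Infinite.exists_subset_card_eq hinf (K + 1)
  obtain ⟨C, hC⟩ := exists_sum_count_le_of_pairwise_finite_inter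
    (hE.mono fun i hi ↦ (hFs hi).1 : (F : Set ι).Pairwise _)
  have hlower : ∀ᶠ n in atTop, ∀ i ∈ F, n ≤ K * Nat.count (· ∈ E i) n :=
    (eventually_all_finset F).2 fun i hi ↦ (hFs hi).2
  obtain ⟨n, hn, hnC⟩ := (hlower.and (eventually_gt_atTop (K * C))).exists
  have : (K + 1) * n ≤ K * (n + C) := calc
    (K + 1) * n = ∑ _i ∈ F, n := by rw [Finset.sum_const, hFcard, smul_eq_mul]
    _ ≤ ∑ i ∈ F, K * Nat.count (· ∈ E i) n := Finset.sum_le_sum hn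
    _ = K * ∑ i ∈ F, Nat.count (· ∈ E i) n := (Finset.mul_sum ..).symm
    _ ≤ K * (n + C) := Nat.mul_le_mul_left K (hC n)
  linarith

end LowerDensity

section SeparatedFamilies

variable {ι : Type*} [LinearOrder ι]

theorem exists_separated_intervals [Countable ι] :
    ∃ a d : ι → ℝ, (∀ i, 0 < d i ∧ 1 + d i ≤ a i ∧ a i + 2 * d i ≤ 2) ∧
      ∀ i j, i < j → a i + 2 * d i + d j ≤ a j := by
  have : Countable (ι ×ₗ Bool) := inferInstanceAs (Countable (ι × Bool))
  have : Nontrivial (Set.Ioo (1 : ℝ) 2) :=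
    ⟨⟨5 / 4, by norm_num⟩, ⟨3 / 2, by norm_num⟩, by norm_num [Subtype.ext_iff]⟩
  obtain ⟨e⟩ := Order.embedding_from_countable_to_dense (ι ×ₗ Bool) (Set.Ioo (1 : ℝ) 2)
  let u (i : ι) : ℝ := e (toLex (i, false))
  let v (i : ι) : ℝ := e (toLex (i, true))
  have huv (i : ι) : u i < v i :=
    Subtype.coe_lt_coe.2 <| e.lt_iff_lt.2 <|
      Prod.Lex.toLex_lt_toLex.2 (.inr ⟨rfl, Bool.false_lt_true⟩)
  have hvu (i j : ι) (hij : i < j) : v i < u j :=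
    Subtype.coe_lt_coe.2 <| e.lt_iff_lt.2 <| Prod.Lex.toLex_lt_toLex.2 (.inl hij)
  have hu (i : ι) : 1 < u i := (e _).2.1
  have hv (i : ι) : v i < 2 := (e _).2.2
  refine ⟨fun i ↦ u i + (v i - u i) / 3, fun i ↦ (v i - u i) / 3, fun i ↦ ⟨?_, ?_, ?_⟩,
    fun i j hij ↦ ?_⟩
  · linarith [huv i]
  · linarith [hu i]
  · linarith [hv i]
  · linarith [hvu i j hij]

/-- The multiples of `N` in the dilate by `T ^ k` of the interval `[a, a + d)`, provided that this
dilate has length at least `N`; otherwise the block is empty. -/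
def dilatedBlock (T a d : ℝ) (N k : ℕ) : Set ℕ :=
  {n | N ∣ n ∧ N ≤ T ^ k * d ∧ T ^ k * a ≤ n ∧ n < T ^ k * (a + d)}

theorem lowerDensity_iUnion_dilatedBlock_pos {T a d : ℝ} {N : ℕ} (hT : 1 < T) (ha : 0 ≤ a)
    (hd : 0 < d) (hN : 0 < N) : 0 < lowerDensity (⋃ k, dilatedBlock T a d N k) := by
  have hN' : (0 : ℝ) < N := mod_cast hN
  obtain ⟨k₀, hk₀⟩ := pow_unbounded_of_one_lt (N / d) hT
  rw [div_lt_iff₀ hd] at hk₀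
  have hab : a / N < (a + d) / N := by gcongr; linarith
  refine lowerDensity_pos_mono ?_
    (lowerDensity_image_mul_pos hN
      (lowerDensity_setOf_exists_mem_Ico_pow_pos hT (by positivity) hab k₀))
  rintro _ ⟨n, ⟨k, hk, hkn, hnk⟩, rfl⟩
  rw [← mul_div_assoc, div_le_iff₀' hN'] at hkn
  rw [← mul_div_assoc, lt_div_iff₀' hN'] at hnk
  have hNk : N ≤ T ^ k * d := hk₀.le.trans (by gcongr; exact hT.le)
  exact Set.mem_iUnion.2 ⟨k, dvd_mul_right .., hNk, mod_cast hkn, mod_cast hnk⟩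

theorem add_le_of_mem_dilatedBlock {T a d : ℝ} {N k m n : ℕ} (hm : m ∈ dilatedBlock T a d N k)
    (hn : n ∈ dilatedBlock T a d N k) (hmn : m < n) : m + N ≤ n := by
  have := Nat.le_of_dvd (Nat.sub_pos_of_lt hmn) (Nat.dvd_sub hn.1 hm.1)
  omega

theorem add_add_le_of_mem_dilatedBlock_of_separated {T a d a' d' : ℝ} {N N' k m n : ℕ} (hT : 0 ≤ T)
    (h : a + 2 * d + d' ≤ a') (hm : m ∈ dilatedBlock T a d N k)
    (hn : n ∈ dilatedBlock T a' d' N' k) : m + N + N' ≤ n := by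
  obtain ⟨-, hN, -, hm⟩ := hm
  obtain ⟨-, hN', hn, -⟩ := hn
  have : T ^ k * (a + 2 * d + d') ≤ T ^ k * a' := by gcongr
  suffices (m + N + N' : ℝ) ≤ n by exact_mod_cast this
  linarith

theorem add_add_le_of_mem_dilatedBlock_of_lt {T a d a' d' : ℝ} {N N' k k' m n : ℕ} (hT : 2 ≤ T)
    (h : a + 2 * d ≤ 2) (h' : 1 + d' ≤ a') (hkk' : k < k') (hm : m ∈ dilatedBlock T a d N k)
    (hn : n ∈ dilatedBlock T a' d' N' k') : m + N + N' ≤ n := by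
  obtain ⟨-, hN, -, hm⟩ := hm
  obtain ⟨-, hN', hn, -⟩ := hn
  have hend : T ^ k * (a + 2 * d) ≤ T ^ k' := calc
    T ^ k * (a + 2 * d) ≤ T ^ k * T := by gcongr; linarith
    _ = T ^ (k + 1) := (pow_succ ..).symm
    _ ≤ T ^ k' := pow_le_pow_right₀ (by linarith) hkk'
  have hstart : T ^ k' * (1 + d') ≤ T ^ k' * a' := by gcongr
  suffices (m + N + N' : ℝ) ≤ n by exact_mod_cast this
  linarith

theorem mul_le_of_mem_dilatedBlock_of_lt {T a d a' d' : ℝ} {N N' k k' L m n : ℕ} (hT : 1 ≤ T)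
    (hL : L * (a + d) ≤ T) (ha' : 1 ≤ a') (hkk' : k < k') (hm : m ∈ dilatedBlock T a d N k)
    (hn : n ∈ dilatedBlock T a' d' N' k') : L * m ≤ n := by
  suffices (L * m : ℝ) ≤ n by exact_mod_cast this
  calc L * m ≤ L * (T ^ k * (a + d)) := by gcongr; exact hm.2.2.2.le
    _ = T ^ k * (L * (a + d)) := mul_left_comm ..
    _ ≤ T ^ k * T := by gcongr
    _ = T ^ (k + 1) := (pow_succ ..).symm
    _ ≤ T ^ k' := pow_le_pow_right₀ hT hkk'
    _ ≤ T ^ k' * a' := le_mul_of_one_le_right (by positivity) ha'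
    _ ≤ n := hn.2.2.1

theorem add_add_le_of_mem_dilatedBlock_of_toLex_lt {T : ℝ} {a d : ι → ℝ} {N : ι → ℕ} (hT : 2 ≤ T)
    (ha : ∀ i, 1 + d i ≤ a i) (had : ∀ i, a i + 2 * d i ≤ 2)
    (hsep : ∀ i j, i < j → a i + 2 * d i + d j ≤ a j) {i j : ι} {k k' m n : ℕ}
    (hm : m ∈ dilatedBlock T (a i) (d i) (N i) k) (hn : n ∈ dilatedBlock T (a j) (d j) (N j) k')
    (h : toLex (k, i) < toLex (k', j)) : m + N i + N j ≤ n := by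
  rcases Prod.Lex.toLex_lt_toLex.1 h with hk | ⟨rfl, hij⟩
  · exact add_add_le_of_mem_dilatedBlock_of_lt hT (had i) (ha j) hk hm hn
  · exact add_add_le_of_mem_dilatedBlock_of_separated (by linarith) (hsep i j hij) hm hn

/-- A family of disjoint sets `A i` of natural numbers of positive lower density in which distinct
elements of `A i` and `A j` differ by at least `max (N i) (N j)`, and by a factor of at least `L`
when the larger one belongs to the smaller index. -/
structure IsSeparatedFamily (N : ι → ℕ) (L : ℕ) (A : ι → Set ℕ) : Prop where
  lowerDensity_pos (i : ι) : 0 < lowerDensity (A i)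
  le_of_mem {i : ι} {n : ℕ} : n ∈ A i → N i ≤ n
  disjoint {i j : ι} : i ≠ j → Disjoint (A i) (A j)
  add_le {i j : ι} {m n : ℕ} : m ∈ A i → n ∈ A j → m < n → m + N i ≤ n ∧ m + N j ≤ n
  mul_le {i j : ι} {m n : ℕ} : j < i → m ∈ A i → n ∈ A j → m < n → L * m ≤ n

theorem exists_isSeparatedFamily [Countable ι] {N : ι → ℕ} (hN : ∀ i, 0 < N i) (L : ℕ) :
    ∃ A, IsSeparatedFamily N L A := by
  obtain ⟨a, d, had, hsep⟩ := exists_separated_intervals (ι := ι)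
  choose hd ha had using had
  let T : ℝ := 2 * L + 2
  have hT : 2 ≤ T := le_add_of_nonneg_left (by positivity)
  let block (i : ι) (k : ℕ) : Set ℕ := dilatedBlock T (a i) (d i) (N i) k
  have hgap {i j k k' m n} (hm : m ∈ block i k) (hn : n ∈ block j k')
      (h : toLex (k, i) < toLex (k', j)) : m + N i + N j ≤ n :=
    add_add_le_of_mem_dilatedBlock_of_toLex_lt hT ha had hsep hm hn h
  refine ⟨fun i ↦ ⋃ k, block i k, fun i ↦ ?_, ?_, fun {i j} hij ↦ ?_, ?_, ?_⟩
  · exact lowerDensity_iUnion_dilatedBlock_pos (by linarith) (by linarith [hd i, ha i])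
      (hd i) (hN i)
  · simp only [Set.mem_iUnion]
    rintro i n ⟨k, -, hNk, hkn, -⟩
    have : T ^ k * d i ≤ T ^ k * a i := by gcongr; linarith [ha i]
    exact_mod_cast hNk.trans (this.trans hkn)
  · simp only [Set.disjoint_left, Set.mem_iUnion, not_exists]
    rintro n ⟨k, hi⟩ k' hj
    have hne : toLex (k, i) ≠ toLex (k', j) := fun h ↦ hij (congrArg (fun x ↦ (ofLex x).2) h)
    have := hN i
    rcases hne.lt_or_gt with h | h
    · linarith [hgap hi hj h]
    · linarith [hgap hj hi h]
  · simp only [Set.mem_iUnion]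
    rintro i j m n ⟨k, hm⟩ ⟨k', hn⟩ hmn
    rcases lt_trichotomy (toLex (k, i)) (toLex (k', j)) with h | h | h
    · constructor <;> linarith [hgap hm hn h]
    · obtain ⟨rfl, rfl⟩ := Prod.mk.inj h
      exact ⟨add_le_of_mem_dilatedBlock hm hn hmn, add_le_of_mem_dilatedBlock hm hn hmn⟩
    · linarith [hgap hn hm h]
  · simp only [Set.mem_iUnion]
    rintro i j m n hji ⟨k, hm⟩ ⟨k', hn⟩ hmn
    have hk : k < k' := not_le.1 fun hk ↦ by
      linarith [hgap hn hm (Prod.Lex.toLex_lt_toLex.2 (hk.lt_or_eq.imp_right (⟨·, hji⟩)))]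
    have hL : L * (a i + d i) ≤ L * 2 := by gcongr; linarith [hd i, had i]
    exact mul_le_of_mem_dilatedBlock_of_lt (by linarith) (by linarith) (by linarith [hd j, ha j])
      hk hm hn

end SeparatedFamilies

section Criterion

variable {𝕜 X κ : Type*} [NormedField 𝕜] [NormedAddCommGroup X] [NormedSpace 𝕜 X]

/-- The sequence `z` consists of preimages of `y` under the powers of `T k` which all operators
`T j` annihilate after a bounded delay and contract geometrically; for `j` not below `k` the
contraction is only required of `T j ^ m (z n)` with `L * m ≤ n`. -/
structure IsGeometricBackwardOrbit [LE κ] (T : κ → X →L[𝕜] X) (q : ℝ) (L : ℕ) (k : κ) (y : X)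
    (z : ℕ → X) : Prop where
  pow_apply (n : ℕ) : (T k ^ n) (z n) = y
  exists_vanishing : ∃ D, ∀ j n m, n + D ≤ m → (T j ^ m) (z n) = 0
  exists_decay : ∃ Y, ∀ j n m, m ≤ n → (j ≤ k ∨ L * m ≤ n) → ‖(T j ^ m) (z n)‖ ≤ Y * q ^ (n - m)

namespace IsGeometricBackwardOrbit

variable {T : κ → X →L[𝕜] X} {q : ℝ} {L : ℕ} {k : κ} {y y' : X} {z z' : ℕ → X}

theorem zero [LE κ] : IsGeometricBackwardOrbit T q L k 0 0 where
  pow_apply n := map_zero _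
  exists_vanishing := ⟨0, fun _ _ _ _ ↦ map_zero _⟩
  exists_decay := ⟨0, fun _ _ _ _ _ ↦ by simp⟩

theorem add [LE κ] (h : IsGeometricBackwardOrbit T q L k y z)
    (h' : IsGeometricBackwardOrbit T q L k y' z') :
    IsGeometricBackwardOrbit T q L k (y + y') (z + z') where
  pow_apply n := by rw [Pi.add_apply, map_add, h.pow_apply, h'.pow_apply]
  exists_vanishing := by
    obtain ⟨D, hD⟩ := h.exists_vanishing
    obtain ⟨D', hD'⟩ := h'.exists_vanishing
    refine ⟨max D D', fun j n m hnm ↦ ?_⟩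
    rw [Pi.add_apply, map_add, hD j n m (by omega), hD' j n m (by omega), add_zero]
  exists_decay := by
    obtain ⟨Y, hY⟩ := h.exists_decay
    obtain ⟨Y', hY'⟩ := h'.exists_decay
    refine ⟨Y + Y', fun j n m hmn hj ↦ ?_⟩
    rw [Pi.add_apply, map_add, add_mul]
    exact norm_add_le_of_le (hY j n m hmn hj) (hY' j n m hmn hj)

theorem smul [LE κ] (c : 𝕜) (h : IsGeometricBackwardOrbit T q L k y z) :
    IsGeometricBackwardOrbit T q L k (c • y) (c • z) where
  pow_apply n := by rw [Pi.smul_apply, map_smul, h.pow_apply]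
  exists_vanishing := by
    obtain ⟨D, hD⟩ := h.exists_vanishing
    refine ⟨D, fun j n m hnm ↦ ?_⟩
    rw [Pi.smul_apply, map_smul, hD j n m hnm, smul_zero]
  exists_decay := by
    obtain ⟨Y, hY⟩ := h.exists_decay
    refine ⟨‖c‖ * Y, fun j n m hmn hj ↦ ?_⟩
    rw [Pi.smul_apply, map_smul, norm_smul, mul_assoc]
    gcongr
    exact hY j n m hmn hj

theorem comp_monotone [Preorder κ] {ι : Type*} [Preorder ι] {φ : ι → κ} (hφ : Monotone φ) {i : ι}
    (h : IsGeometricBackwardOrbit T q L (φ i) y z) :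
    IsGeometricBackwardOrbit (T ∘ φ) q L i y z where
  pow_apply := h.pow_apply
  exists_vanishing := h.exists_vanishing.imp fun _ hD j ↦ hD (φ j)
  exists_decay := h.exists_decay.imp fun _ hY j n m hmn hj ↦
    hY (φ j) n m hmn (hj.imp_left (hφ ·))

theorem exists_mem_span [LE κ] {s : Set X}
    (hs : ∀ y ∈ s, ∃ z, IsGeometricBackwardOrbit T q L k y z) (hy : y ∈ Submodule.span 𝕜 s) :
    ∃ z, IsGeometricBackwardOrbit T q L k y z := by
  induction hy using Submodule.span_induction with
  | mem y hy => exact hs y hy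
  | zero => exact ⟨0, zero⟩
  | add y y' _ _ h h' => exact ⟨_, h.choose_spec.add h'.choose_spec⟩
  | smul c y _ h => exact ⟨_, h.choose_spec.smul c⟩

end IsGeometricBackwardOrbit

theorem exists_eq_of_pairwise_disjoint {ι α M : Type*} [Zero M] {A : ι → Set α}
    (hA : ∀ i j, i ≠ j → Disjoint (A i) (A j)) (z : ι → α → M) :
    ∃ Z : α → M, (∀ i, ∀ n ∈ A i, Z n = z i n) ∧ ∀ n, (∃ i, n ∈ A i) ∨ Z n = 0 := by
  classical
  refine ⟨fun n ↦ if h : ∃ i, n ∈ A i then z h.choose n else 0, fun i n hn ↦ ?_,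
    fun n ↦ or_iff_not_imp_left.2 fun hn ↦ dif_neg hn⟩
  have h : ∃ i, n ∈ A i := ⟨i, hn⟩
  have hi : h.choose = i := not_not.1 fun hne ↦
    Set.disjoint_left.1 (hA _ _ hne) h.choose_spec hn
  exact (dif_pos h).trans (by rw [hi])

theorem norm_tsum_sub_le_of_geometric_tail {f : ℕ → X} {m N : ℕ} {r : ℝ} (hr0 : 0 ≤ r) (hr1 : r < 1)
    (hf : Summable f) (hN : 0 < N) (hgap : ∀ n, n ≠ m → n < m + N → f n = 0)
    (htail : ∀ n, m + N ≤ n → ‖f n‖ ≤ r ^ (n - m)) : ‖∑' n, f n - f m‖ ≤ r ^ N * (1 - r)⁻¹ := by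
  have hhead : ∑ n ∈ Finset.range (m + N), f n = f m :=
    Finset.sum_eq_single m (fun n hn hnm ↦ hgap n hnm (Finset.mem_range.1 hn))
      fun hm ↦ absurd (Finset.mem_range.2 (by omega)) hm
  rw [← hf.sum_add_tsum_nat_add (m + N), hhead, add_sub_cancel_left]
  refine tsum_of_norm_bounded ((hasSum_geometric_of_lt_one hr0 hr1).mul_left (r ^ N)) fun k ↦ ?_
  rw [← pow_add]
  convert htail (k + (m + N)) (by omega) using 2
  omega

theorem exists_pow_bounds {q r : ℝ} (hq : 0 ≤ q) (hqr : q < r) (hr : r < 1) (D : ℕ) (Y : ℝ) {ε : ℝ}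
    (hε : 0 < ε) : ∃ N, 0 < N ∧ D ≤ N ∧ (∀ n, N ≤ n → Y * q ^ n ≤ r ^ n) ∧
      r ^ N * (1 - r)⁻¹ ≤ ε := by
  have hr0 : 0 < r := hq.trans_lt hqr
  have hY : ∀ᶠ n : ℕ in atTop, Y * q ^ n ≤ r ^ n := by
    filter_upwards [((isLittleO_pow_pow_of_lt_left hq hqr).const_mul_left Y).bound one_pos]
      with n hn
    simpa [abs_of_pos hr0] using (le_abs_self _).trans hn
  have hlim : Tendsto (fun N ↦ r ^ N * (1 - r)⁻¹) atTop (𝓝 0) := by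
    simpa using (tendsto_pow_atTop_nhds_zero_of_lt_one hr0.le hr).mul_const (1 - r)⁻¹
  obtain ⟨N, hDN, hN0, hYN, hNε⟩ := ((eventually_ge_atTop D).and <| (eventually_gt_atTop 0).and <|
    (eventually_forall_ge_atTop.2 hY).and <| hlim.eventually_le_const hε).exists
  exact ⟨N, hN0, hDN, hYN, hNε⟩

theorem exists_forall_lowerDensity_pos [CompleteSpace X] {ι : Type*} [LinearOrder ι] [Countable ι]
    {T : ι → X →L[𝕜] X} {q : ℝ} {L : ℕ} {y : ι → X} {z : ι → ℕ → X} {ε : ι → ℝ} (hq0 : 0 ≤ q)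
    (hq1 : q < 1) (hε : ∀ i, 0 < ε i) (h : ∀ i, IsGeometricBackwardOrbit T q L i (y i) (z i)) :
    ∃ x, ∀ i, 0 < lowerDensity {m | ‖(T i ^ m) x - y i‖ ≤ ε i} := by
  obtain ⟨r, hqr, hr1⟩ := exists_between hq1
  have hr0 : 0 ≤ r := hq0.trans hqr.le
  choose D hD using fun i ↦ (h i).exists_vanishing
  choose Y hY using fun i ↦ (h i).exists_decay
  choose N hN0 hDN hYN hNε using fun i ↦ exists_pow_bounds hq0 hqr hr1 (D i) (Y i) (hε i)
  obtain ⟨A, hA⟩ := exists_isSeparatedFamily hN0 L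
  obtain ⟨Z, hZ, hZ0⟩ := exists_eq_of_pairwise_disjoint (fun i j ↦ hA.disjoint) z
  have hdecay {i j n m} (hn : n ∈ A i) (hmn : m + N i ≤ n) (hj : j ≤ i ∨ L * m ≤ n) :
      ‖(T j ^ m) (Z n)‖ ≤ r ^ (n - m) := by
    rw [hZ i n hn]
    exact (hY i j n m (by omega) hj).trans (hYN i _ (by omega))
  have hsum : Summable Z := by
    refine .of_norm_bounded (summable_geometric_of_lt_one hr0 hr1) fun n ↦ ?_
    obtain ⟨i, hn⟩ | hn := hZ0 n
    · exact hdecay (m := 0) (j := i) hn (by simpa using hA.le_of_mem hn) (.inl le_rfl)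
    · rw [hn, norm_zero]
      positivity
  refine ⟨∑' n, Z n, fun i ↦ lowerDensity_pos_mono (fun m hm ↦ ?_) (hA.lowerDensity_pos i)⟩
  have hmain : (T i ^ m) (Z m) = y i := by rw [hZ i m hm, (h i).pow_apply]
  rw [Set.mem_ofPred_eq, (T i ^ m).map_tsum hsum, ← hmain]
  refine (norm_tsum_sub_le_of_geometric_tail hr0 hr1 ((T i ^ m).summable hsum) (hN0 i)
    (fun n hnm hn ↦ ?_) fun n hn ↦ ?_).trans (hNε i)
  · obtain ⟨j, hnj⟩ | hn0 := hZ0 n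
    · have hlt : n < m := hnm.lt_of_le (not_lt.1 fun hmn ↦ by
        have := (hA.add_le hm hnj hmn).1
        omega)
      rw [hZ j n hnj]
      exact hD j i n m ((add_le_add_right (hDN j) n).trans (hA.add_le hnj hm hlt).1)
    · rw [hn0, map_zero]
  · have hmn : m < n := by have := hN0 i; omega
    obtain ⟨j, hnj⟩ | hn0 := hZ0 n
    · exact hdecay hnj (hA.add_le hm hnj hmn).2
        ((le_or_gt i j).imp_right fun hji ↦ hA.mul_le hji hm hnj hmn)
    · rw [hn0, map_zero, norm_zero]
      positivity

end Criterion

section FrequentHypercyclicity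

variable {X κ : Type*} [NormedAddCommGroup X] [NormedSpace ℂ X] [CompleteSpace X] [LinearOrder κ]
  [Countable κ] {T : κ → X →L[ℂ] X} {q : ℝ} {L : ℕ}

theorem nonempty_iInter_FHC_of_denseRange {u : ℕ → X} (hu : DenseRange u) (hq0 : 0 ≤ q)
    (hq1 : q < 1) (h : ∀ k n, ∃ z, IsGeometricBackwardOrbit T q L k (u n) z) :
    (⋂ k, FHC (T k)).Nonempty := by
  have : Countable (κ ×ₗ (ℕ ×ₗ ℕ)) := inferInstanceAs (Countable (κ × ℕ × ℕ))
  choose z hz using h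
  obtain ⟨x, hx⟩ := exists_forall_lowerDensity_pos hq0 hq1
    (ε := fun i : κ ×ₗ (ℕ ×ₗ ℕ) ↦ 1 / ((ofLex (ofLex i).2).2 + 1))
    (fun i ↦ Nat.one_div_pos_of_nat)
    fun i ↦ (hz (ofLex i).1 (ofLex (ofLex i).2).1).comp_monotone Prod.Lex.monotone_fst_ofLex
  refine ⟨x, Set.mem_iInter.2 fun k U hU hUne ↦ ?_⟩
  obtain ⟨n, hn⟩ := hu.exists_mem_open hU hUne
  obtain ⟨δ, hδ, hball⟩ := Metric.isOpen_iff.1 hU _ hn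
  obtain ⟨e, he⟩ := exists_nat_one_div_lt hδ
  exact lowerDensity_pos_mono (fun m hm ↦ hball (mem_ball_iff_norm.2 (hm.trans_lt he)))
    (hx (toLex (k, toLex (n, e))))

theorem nonempty_iInter_FHC_of_dense_span {s : Set X} (hs : s.Countable)
    (hspan : Dense (Submodule.span ℂ s : Set X)) (hq0 : 0 ≤ q) (hq1 : q < 1)
    (h : ∀ k, ∀ y ∈ s, ∃ z, IsGeometricBackwardOrbit T q L k y z) : (⋂ k, FHC (T k)).Nonempty := by
  obtain ⟨t, hts, htc, htd⟩ :=
    (hs.isSeparable.span (R := ℂ)).exists_countable_dense_subset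
  have ht : Dense t := dense_closure.1 (hspan.mono htd)
  obtain ⟨u, rfl⟩ := htc.exists_eq_range ht.nonempty
  exact nonempty_iInter_FHC_of_denseRange ht hq0 hq1 fun k n ↦
    IsGeometricBackwardOrbit.exists_mem_span (h k) (hts (Set.mem_range_self n))

end FrequentHypercyclicity

section Multiples

variable {𝕜 X κ : Type*} [NormedField 𝕜] [NormedAddCommGroup X] [NormedSpace 𝕜 X]

/-- A sequence of successive preimages under `B`, starting in the generalized kernel of `B` and
growing at most like `ρ ^ n`. -/
structure IsBackwardOrbit (B : X →L[𝕜] X) (ρ : ℝ) (u : ℕ → X) : Prop where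
  apply_succ (n : ℕ) : B (u (n + 1)) = u n
  exists_pow_apply_zero : ∃ D, (B ^ D) (u 0) = 0
  exists_norm_le : ∃ Y, ∀ n, ‖u n‖ ≤ Y * ρ ^ n

namespace IsBackwardOrbit

variable {B : X →L[𝕜] X} {ρ : ℝ} {u : ℕ → X}

theorem pow_apply_add (hu : IsBackwardOrbit B ρ u) (n m : ℕ) : (B ^ m) (u (n + m)) = u n := by
  induction m with
  | zero => rfl
  | succ m ih => rw [pow_succ, mul_apply_eq_comp, ← add_assoc, hu.apply_succ, ih]

theorem exists_pow_apply_eq_zero (hu : IsBackwardOrbit B ρ u) :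
    ∃ D, ∀ n m, n + D ≤ m → (B ^ m) (u n) = 0 := by
  obtain ⟨D, hD⟩ := hu.exists_pow_apply_zero
  refine ⟨D, fun n m hm ↦ ?_⟩
  obtain ⟨k, rfl⟩ := Nat.exists_eq_add_of_le' hm
  have hn : (B ^ n) (u n) = u 0 := by simpa using hu.pow_apply_add 0 n
  rw [add_comm n, pow_add, pow_add, mul_apply_eq_comp, mul_apply_eq_comp, hn, hD, map_zero]

theorem norm_smul_pow_apply_le (hu : IsBackwardOrbit B ρ u) {a b : 𝕜} {α Y : ℝ} (hα : 0 < α)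
    (hb : α ≤ ‖b‖) (hρ : 0 ≤ ρ) (hY : ∀ n, ‖u n‖ ≤ Y * ρ ^ n) {m n : ℕ} (hmn : m ≤ n) :
    ‖((a • B) ^ m) ((b ^ n)⁻¹ • u n)‖ ≤ (‖a‖ / ‖b‖) ^ m * (Y * (ρ / α) ^ (n - m)) := by
  obtain ⟨k, rfl⟩ := Nat.exists_eq_add_of_le' hmn
  have hY0 : 0 ≤ Y := by simpa using (norm_nonneg _).trans (hY 0)
  have hb0 : 0 < ‖b‖ := hα.trans_le hb
  rw [Nat.add_sub_cancel, smul_pow, smul_apply, map_smul, hu.pow_apply_add]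
  calc ‖a ^ m • (b ^ (k + m))⁻¹ • u k‖ = (‖a‖ / ‖b‖) ^ m * (‖u k‖ / ‖b‖ ^ k) := by
        rw [norm_smul, norm_smul, norm_inv, norm_pow, norm_pow, pow_add, div_pow]
        field_simp
    _ ≤ (‖a‖ / ‖b‖) ^ m * (Y * ρ ^ k / α ^ k) := by gcongr; exact hY k
    _ = (‖a‖ / ‖b‖) ^ m * (Y * (ρ / α) ^ k) := by rw [div_pow ρ, mul_div_assoc]

theorem isGeometricBackwardOrbit_smul [Preorder κ] (hu : IsBackwardOrbit B ρ u) {c : κ → 𝕜}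
    {α β q : ℝ} {s : ℕ} (hα : 0 < α) (hcα : ∀ k, α ≤ ‖c k‖) (hcβ : ∀ k, ‖c k‖ ≤ β)
    (hc : Monotone fun k ↦ ‖c k‖) (hρ : 0 ≤ ρ) (hq0 : 0 ≤ q) (hq1 : q ≤ 1) (hq : q ^ 2 = ρ / α)
    (hs : β / α * q ^ s ≤ 1) (k : κ) :
    IsGeometricBackwardOrbit (fun k ↦ c k • B) q (s + 1) k (u 0) fun n ↦ (c k ^ n)⁻¹ • u n where
  pow_apply n := by
    have hck : c k ^ n ≠ 0 := pow_ne_zero n (norm_pos_iff.1 (hα.trans_le (hcα k)))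
    rw [smul_pow, smul_apply, map_smul, smul_inv_smul₀ hck]
    simpa using hu.pow_apply_add 0 n
  exists_vanishing := by
    obtain ⟨D, hD⟩ := hu.exists_pow_apply_eq_zero
    refine ⟨D, fun j n m hnm ↦ ?_⟩
    rw [smul_pow, smul_apply, map_smul, hD n m hnm, smul_zero, smul_zero]
  exists_decay := by
    obtain ⟨Y, hY⟩ := hu.exists_norm_le
    have hY0 : 0 ≤ Y := by simpa using (norm_nonneg _).trans (hY 0)
    refine ⟨Y, fun j n m hmn hj ↦ (hu.norm_smul_pow_apply_le hα (hcα k) hρ hY hmn).trans ?_⟩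
    have hck : 0 < ‖c k‖ := hα.trans_le (hcα k)
    have hβ : 0 ≤ β := hck.le.trans (hcβ k)
    -- One factor `q` of `ρ / α = q ^ 2` is the rate of decay, the other one makes up for the ratio.
    have hratio : (‖c j‖ / ‖c k‖) ^ m * q ^ (n - m) ≤ 1 := by
      rcases hj with hj | hj
      · exact mul_le_one₀ (pow_le_one₀ (by positivity) (div_le_one_of_le₀ (hc hj) hck.le))
          (by positivity) (pow_le_one₀ hq0 hq1)
      · have hsm : s * m ≤ n - m := by rw [add_one_mul] at hj; omega
        calc (‖c j‖ / ‖c k‖) ^ m * q ^ (n - m) ≤ (β / α) ^ m * q ^ (s * m) := by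
              gcongr ?_ ^ m * ?_
              exacts [div_le_div₀ hβ (hcβ j) hα (hcα k), pow_le_pow_of_le_one hq0 hq1 hsm]
          _ = (β / α * q ^ s) ^ m := by rw [mul_pow, pow_mul]
          _ ≤ 1 := pow_le_one₀ (by positivity) hs
    calc (‖c j‖ / ‖c k‖) ^ m * (Y * (ρ / α) ^ (n - m))
        = (‖c j‖ / ‖c k‖) ^ m * q ^ (n - m) * (Y * q ^ (n - m)) := by rw [← hq]; ring
      _ ≤ 1 * (Y * q ^ (n - m)) := by gcongr
      _ = Y * q ^ (n - m) := one_mul _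

end IsBackwardOrbit

theorem nonempty_iInter_FHC_smul {X κ : Type*} [NormedAddCommGroup X] [NormedSpace ℂ X]
    [CompleteSpace X] [LinearOrder κ] [Countable κ] {B : X →L[ℂ] X} {s : Set X} {c : κ → ℂ}
    {ρ α β : ℝ} (hs : s.Countable) (hspan : Dense (Submodule.span ℂ s : Set X))
    (hB : ∀ y ∈ s, ∃ u, IsBackwardOrbit B ρ u ∧ u 0 = y) (hρ : 0 ≤ ρ) (hρα : ρ < α)
    (hcα : ∀ k, α ≤ ‖c k‖) (hcβ : ∀ k, ‖c k‖ ≤ β) (hc : Monotone fun k ↦ ‖c k‖) :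
    (⋂ k, FHC (c k • B)).Nonempty := by
  have hα : 0 < α := hρ.trans_lt hρα
  let q := √(ρ / α)
  have hq1 : q < 1 := (Real.sqrt_lt' one_pos).2 (by rwa [one_pow, div_lt_one hα])
  have hlim : Tendsto (fun s ↦ β / α * q ^ s) atTop (𝓝 0) := by
    simpa using (tendsto_pow_atTop_nhds_zero_of_lt_one (Real.sqrt_nonneg _) hq1).const_mul (β / α)
  obtain ⟨t, ht⟩ := (hlim.eventually_le_const one_pos).exists
  refine nonempty_iInter_FHC_of_dense_span (L := t + 1) hs hspan (Real.sqrt_nonneg _) hq1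
    fun k y hy ↦ ?_
  obtain ⟨u, hu, rfl⟩ := hB y hy
  exact ⟨_, hu.isGeometricBackwardOrbit_smul hα hcα hcβ hc hρ (Real.sqrt_nonneg _) hq1.le
    (Real.sq_sqrt (by positivity)) ht k⟩

end Multiples

section WeightedShift

theorem exists_norm_le_mul_pow_of_limsup_lt {E : Type*} [SeminormedAddGroup E] {u : ℕ → E} {R : ℝ}
    (h : limsup (fun n : ℕ ↦ ‖u n‖ₑ ^ (1 / (n : ℝ))) atTop < ENNReal.ofReal R) :
    ∃ C, 0 < C ∧ ∀ n, ‖u n‖ ≤ C * R ^ n := by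
  have hR : 0 < R := ENNReal.ofReal_pos.1 (bot_le.trans_lt h)
  have hbound : u =O[atTop] (R ^ · : ℕ → ℝ) := by
    refine .of_bound 1 ?_
    filter_upwards [eventually_lt_of_limsup_lt h, eventually_gt_atTop 0] with n hn hn0
    have hn0' : (0 : ℝ) < n := mod_cast hn0
    rw [one_div, ENNReal.rpow_inv_lt_iff hn0', ENNReal.rpow_natCast, ← ENNReal.ofReal_pow hR.le,
      ← ofReal_norm, ENNReal.ofReal_lt_ofReal_iff (by positivity)] at hn
    rw [one_mul, Real.norm_of_nonneg (by positivity)]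
    exact hn.le
  obtain ⟨C, hC0, hC⟩ := Asymptotics.bound_of_isBigO_nat_atTop hbound
  refine ⟨C, hC0, fun n ↦ ?_⟩
  simpa [abs_of_pos hR] using hC (pow_pos hR n).ne'

/-- The product `w 1 * ⋯ * w n` of the first `n` weights of a weighted shift. -/
def weightProd {M : Type*} [CommMonoid M] (w : ℕ → M) (n : ℕ) : M := ∏ k ∈ Finset.Icc 1 n, w k

theorem weightProd_succ {M : Type*} [CommMonoid M] (w : ℕ → M) (n : ℕ) :
    weightProd w (n + 1) = weightProd w n * w (n + 1) :=
  Finset.prod_Icc_succ_top (by omega) _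

theorem weightProd_ne_zero {M : Type*} [CommMonoidWithZero M] [NoZeroDivisors M] [Nontrivial M]
    {w : ℕ → M} (hw : ∀ n, 1 ≤ n → w n ≠ 0) (n : ℕ) : weightProd w n ≠ 0 :=
  Finset.prod_ne_zero_iff.2 fun k hk ↦ hw k (Finset.mem_Icc.1 hk).1

theorem enorm_weightProd {𝕜 : Type*} [NormedField 𝕜] (w : ℕ → 𝕜) (n : ℕ) :
    ‖weightProd w n‖ₑ = ∏ k ∈ Finset.Icc 1 n, ‖w k‖ₑ := by
  simp only [weightProd, enorm_eq_nnnorm, nnnorm_prod, ENNReal.ofNNReal_finsetProd]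

theorem lamw_eq_limsup_enorm (w : ℕ → ℂ) :
    lamw w = limsup (fun n : ℕ ↦ ‖weightProd w n‖ₑ ^ (1 / (n : ℝ))) atTop := by
  simp only [lamw, enorm_weightProd, ← enorm_eq_nnnorm]

theorem rpwInv_eq_limsup_enorm {w : ℕ → ℂ} (hw : ∀ n, 1 ≤ n → w n ≠ 0) :
    rpwInv w = limsup (fun n : ℕ ↦ ‖(weightProd w n)⁻¹‖ₑ ^ (1 / (n : ℝ))) atTop := by
  simp only [rpwInv, enorm_inv (weightProd_ne_zero hw _), enorm_weightProd, ← enorm_eq_nnnorm]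

theorem lamw_lt_top {w : ℕ → ℂ} {A : ℝ} (hw : ∀ n, ‖w n‖ ≤ A) : lamw w < ⊤ := by
  rw [lamw_eq_limsup_enorm]
  refine (limsup_le_of_le (a := ENNReal.ofReal A) (by isBoundedDefault) ?_).trans_lt
    ENNReal.ofReal_lt_top
  filter_upwards [eventually_gt_atTop 0] with n hn
  rw [one_div, ENNReal.rpow_inv_le_iff (mod_cast hn), ENNReal.rpow_natCast, enorm_weightProd]
  calc ∏ k ∈ Finset.Icc 1 n, ‖w k‖ₑ ≤ ∏ _k ∈ Finset.Icc 1 n, ENNReal.ofReal A :=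
        Finset.prod_le_prod' fun k _ ↦ by
          rw [← ofReal_norm]
          exact ENNReal.ofReal_le_ofReal (hw k)
    _ = ENNReal.ofReal A ^ n := by simp

variable {𝕜 : Type*} [NormedField 𝕜] {p : ℝ≥0∞} [Fact (1 ≤ p)] {w : ℕ → 𝕜}
  {B : lp (fun _ : ℕ ↦ 𝕜) p →L[𝕜] lp (fun _ : ℕ ↦ 𝕜) p}

/-- `B` is the weighted backward shift with weights `w 1, w 2, …`. -/
def IsWeightedBackwardShift (w : ℕ → 𝕜)
    (B : lp (fun _ : ℕ ↦ 𝕜) p →L[𝕜] lp (fun _ : ℕ ↦ 𝕜) p) : Prop :=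
  ∀ x n, (B x) n = w (n + 1) * x (n + 1)

namespace IsWeightedBackwardShift

theorem pow_apply_mul_weightProd (hB : IsWeightedBackwardShift w B) (m : ℕ)
    (x : lp (fun _ : ℕ ↦ 𝕜) p) (i : ℕ) :
    ((B ^ m) x) i * weightProd w i = weightProd w (i + m) * x (i + m) := by
  induction m generalizing i with
  | zero => exact mul_comm ..
  | succ m ih =>
    rw [pow_succ', mul_apply_eq_comp, hB]
    have := ih (i + 1)
    rw [weightProd_succ, add_right_comm, add_assoc] at this
    linear_combination this

theorem apply_single_zero (hB : IsWeightedBackwardShift w B) : B (lp.single p 0 1) = 0 := by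
  ext i
  rw [hB, lp.single_apply_ne _ _ _ i.succ_ne_zero, mul_zero, lp.coeFn_zero, Pi.zero_apply]

theorem apply_single_succ (hB : IsWeightedBackwardShift w B) (n : ℕ) :
    B (lp.single p (n + 1) 1) = w (n + 1) • lp.single p n 1 := by
  ext i
  rw [hB, lp.coeFn_smul, Pi.smul_apply, smul_eq_mul]
  rcases eq_or_ne i n with rfl | hin
  · rw [lp.single_apply_self, lp.single_apply_self]
  · rw [lp.single_apply_ne _ _ _ (by omega), lp.single_apply_ne _ _ _ hin, mul_zero, mul_zero]

theorem pow_apply_single_eq_zero (hB : IsWeightedBackwardShift w B) (i : ℕ) :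
    (B ^ (i + 1)) (lp.single p i 1) = 0 := by
  induction i with
  | zero => simpa using hB.apply_single_zero
  | succ i ih => rw [pow_succ, mul_apply_eq_comp, hB.apply_single_succ, map_smul, ih, smul_zero]

theorem exists_isBackwardOrbit (hB : IsWeightedBackwardShift w B) (hw : ∀ n, 1 ≤ n → w n ≠ 0)
    {C ρ : ℝ} (hC : ∀ n, ‖(weightProd w n)⁻¹‖ ≤ C * ρ ^ n) (i : ℕ) :
    ∃ u, IsBackwardOrbit B ρ u ∧ u 0 = lp.single p i 1 := by
  have hu0 : (weightProd w i / weightProd w (0 + i)) • lp.single (E := fun _ ↦ 𝕜) p (0 + i) 1 =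
      lp.single p i 1 := by
    rw [zero_add, div_self (weightProd_ne_zero hw i), one_smul]
  refine ⟨fun n ↦ (weightProd w i / weightProd w (n + i)) • lp.single p (n + i) 1,
    ⟨fun n ↦ ?_, ⟨i + 1, ?_⟩, ‖weightProd w i‖ * C * ρ ^ i, fun n ↦ ?_⟩, hu0⟩
  · have := weightProd_ne_zero hw (n + i)
    have := hw (n + i + 1) (by omega)
    rw [add_right_comm, map_smul, hB.apply_single_succ, smul_smul, weightProd_succ]
    congr 1
    field_simp
  · rw [hu0, hB.pow_apply_single_eq_zero]
  · rw [norm_smul, lp.norm_single (zero_lt_one.trans_le Fact.out), norm_one, mul_one,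
      div_eq_mul_inv, norm_mul]
    calc ‖weightProd w i‖ * ‖(weightProd w (n + i))⁻¹‖ ≤ ‖weightProd w i‖ * (C * ρ ^ (n + i)) := by
          gcongr
          exact hC _
      _ = ‖weightProd w i‖ * C * ρ ^ i * ρ ^ n := by ring

end IsWeightedBackwardShift

theorem dense_span_range_single (hp : p ≠ ⊤) :
    Dense (Submodule.span 𝕜 (Set.range fun i : ℕ ↦ lp.single (E := fun _ ↦ 𝕜) p i 1) :
      Set (lp (fun _ : ℕ ↦ 𝕜) p)) := by
  intro x
  refine mem_closure_of_tendsto (lp.hasSum_single hp x).tendsto_sum_nat (.of_forall fun n ↦ ?_)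
  refine Submodule.sum_mem _ fun i _ ↦ ?_
  rw [← mul_one (x i), ← smul_eq_mul, lp.single_smul]
  exact Submodule.smul_mem _ _ (Submodule.subset_span (Set.mem_range_self i))

end WeightedShift

section HittingTimes

theorem exists_forall_frequently_le_mul_of_lowerDensity_pos {E : Set ℕ} (hE : 0 < lowerDensity E) :
    ∃ K : ℕ, ∀ F : Set ℕ, F.Infinite → ∃ᶠ m in atTop, m ∈ F ∧ ∃ n ∈ E, m ≤ n ∧ n ≤ K * m := by
  obtain ⟨K, hK⟩ := exists_mem_Icc_mul_of_lowerDensity_pos hE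
  exact ⟨K, fun F hF ↦ (Nat.frequently_atTop_iff_infinite.2 hF).and_eventually hK⟩

theorem exists_forall_frequently_mem_le_mul_of_lowerDensity_pos {F : Set ℕ}
    (hF : 0 < lowerDensity F) :
    ∃ K : ℕ, ∀ E : Set ℕ, E.Infinite → ∃ᶠ m in atTop, m ∈ F ∧ ∃ n ∈ E, m ≤ n ∧ n ≤ K * m := by
  obtain ⟨K, hK⟩ := exists_mem_le_mul_of_lowerDensity_pos hF
  refine ⟨K, fun E hE ↦ frequently_atTop.2 fun M ↦ ?_⟩
  obtain ⟨n, hnE, ⟨m, hmF, hmn, hnm⟩, hMn⟩ :=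
    ((Nat.frequently_atTop_iff_infinite.2 hE).and_eventually
      (hK.and (eventually_gt_atTop (K * M)))).exists
  exact ⟨m, (Nat.lt_of_mul_lt_mul_left (hMn.trans_le hnm)).le, hmF, n, hnE, hmn, hnm⟩

theorem finite_setOf_pow_le_mul_pow {a b : ℝ} (ha : 0 < a) (hab : a < b) (C : ℝ) :
    {n : ℕ | b ^ n ≤ C * a ^ n}.Finite := by
  have hlim := tendsto_pow_atTop_atTop_of_one_lt ((one_lt_div ha).2 hab)
  rw [← Set.not_infinite, ← Nat.frequently_atTop_iff_infinite, not_frequently]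
  filter_upwards [hlim.eventually_gt_atTop C] with n hn
  rwa [not_le, ← lt_div_iff₀ (by positivity), ← div_pow]

theorem le_mul_max_pow_of_frequently {a b r K : ℝ} {κ : ℕ} {v : ℕ → ℝ} (ha : 0 < a) (hr : 0 ≤ r)
    (hK : 0 ≤ K) (hv : ∀ R > r, ∃ C, 0 < C ∧ ∀ n, v n ≤ C * R ^ n)
    (h : ∃ᶠ m in atTop, ∃ n, m ≤ n ∧ n ≤ κ * m ∧ b ^ m ≤ K * a ^ n * v (n - m)) :
    b ≤ a * max (a * r) 1 ^ κ := by
  have hR (R : ℝ) (hrR : r < R) : b ≤ a * max (a * R) 1 ^ κ := by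
    obtain ⟨C, hC0, hC⟩ := hv R hrR
    by_contra! hlt
    refine h.and_eventually (Nat.cofinite_eq_atTop ▸
      (finite_setOf_pow_le_mul_pow (by positivity) hlt (K * C)).eventually_cofinite_notMem)
      (.of_forall ?_)
    rintro m ⟨⟨n, hmn, hnm, hb⟩, hm⟩
    refine hm (hb.trans ?_)
    obtain ⟨k, rfl⟩ := Nat.exists_eq_add_of_le hmn
    have hR0 : 0 ≤ R := hr.trans hrR.le
    calc K * a ^ (m + k) * v (m + k - m) ≤ K * a ^ (m + k) * (C * R ^ k) := by
          rw [Nat.add_sub_cancel_left]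
          gcongr
          exact hC k
      _ = K * C * a ^ m * (a * R) ^ k := by ring
      _ ≤ K * C * a ^ m * max (a * R) 1 ^ (κ * m) := by
          gcongr
          exact (pow_le_pow_left₀ (by positivity) (le_max_left ..) k).trans
            (pow_le_pow_right₀ (le_max_right ..) (by omega))
      _ = K * C * (a * max (a * R) 1 ^ κ) ^ m := by rw [mul_pow a, pow_mul]; ring
  have hcont : Continuous fun R ↦ a * max (a * R) 1 ^ κ := by fun_prop
  exact ge_of_tendsto (hcont.tendsto r |>.mono_left nhdsWithin_le_nhds)
    (eventually_nhdsWithin_of_forall (s := Set.Ioi r) hR)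

/-- The properties shared by the return times `E a` of a common frequently hypercyclic vector of
the multiples `a • B`, `a ∈ Λ`, of a weighted backward shift `B` whose weights have products of
absolute value `v`. -/
structure IsReturnTimeFamily (Λ : Set ℝ) (E : ℝ → Set ℕ) (v : ℕ → ℝ) (K : ℝ) : Prop where
  subset_Ioi : Λ ⊆ Set.Ioi 0
  nonneg : 0 ≤ K
  lowerDensity_pos {a : ℝ} : a ∈ Λ → 0 < lowerDensity (E a)
  pow_le {a b : ℝ} {m n : ℕ} : a ∈ Λ → b ∈ Λ → n ∈ E a → m ∈ E b → m ≤ n →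
    b ^ m ≤ K * a ^ n * v (n - m)

namespace IsReturnTimeFamily

variable {Λ : Set ℝ} {E : ℝ → Set ℕ} {v : ℕ → ℝ} {r K : ℝ}

theorem countable (h : IsReturnTimeFamily Λ E v K) : Λ.Countable := by
  have hfin {a b} (ha : a ∈ Λ) (hb : b ∈ Λ) (hab : a < b) : (E a ∩ E b).Finite := by
    refine (finite_setOf_pow_le_mul_pow (h.subset_Ioi ha) hab (K * v 0)).subset fun n hn ↦ ?_
    simpa [mul_right_comm] using h.pow_le ha hb hn.1 hn.2 le_rfl
  refine countable_of_lowerDensity_pos (fun a ↦ h.lowerDensity_pos) fun a ha b hb hab ↦ ?_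
  rcases hab.lt_or_gt with hab | hab
  · exact hfin ha hb hab
  · exact Set.inter_comm (E a) (E b) ▸ hfin hb ha hab

theorem bddAbove (h : IsReturnTimeFamily Λ E v K) (hr : 0 ≤ r)
    (hv : ∀ R > r, ∃ C, 0 < C ∧ ∀ n, v n ≤ C * R ^ n) : BddAbove Λ := by
  obtain rfl | ⟨a, ha⟩ := Λ.eq_empty_or_nonempty
  · exact bddAbove_empty
  obtain ⟨κ, hκ⟩ :=
    exists_forall_frequently_le_mul_of_lowerDensity_pos (h.lowerDensity_pos ha)
  refine ⟨a * max (a * r) 1 ^ κ, fun b hb ↦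
    le_mul_max_pow_of_frequently (h.subset_Ioi ha) hr h.nonneg hv ?_⟩
  refine (hκ _ (infinite_of_lowerDensity_pos (h.lowerDensity_pos hb))).mono ?_
  rintro m ⟨hm, n, hn, hmn, hnm⟩
  exact ⟨n, hmn, hnm, h.pow_le ha hb hn hm hmn⟩

theorem one_lt_mul_of_mem_closure (h : IsReturnTimeFamily Λ E v K) (hr : 0 ≤ r)
    (hv : ∀ R > r, ∃ C, 0 < C ∧ ∀ n, v n ≤ C * R ^ n) {a b : ℝ} (ha : a ∈ closure Λ) (hb : b ∈ Λ)
    (hab : a < b) : 1 < a * r := by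
  obtain ⟨κ, hκ⟩ :=
    exists_forall_frequently_mem_le_mul_of_lowerDensity_pos (h.lowerDensity_pos hb)
  have hclosed : IsClosed {a | b ≤ a * max (a * r) 1 ^ κ} :=
    isClosed_le continuous_const (by fun_prop)
  have hsub : Λ ⊆ {a | b ≤ a * max (a * r) 1 ^ κ} := by
    refine fun a ha ↦ le_mul_max_pow_of_frequently (h.subset_Ioi ha) hr h.nonneg hv ?_
    refine (hκ _ (infinite_of_lowerDensity_pos (h.lowerDensity_pos ha))).mono ?_
    rintro m ⟨hm, n, hn, hmn, hnm⟩
    exact ⟨n, hmn, hnm, h.pow_le ha hb hn hm hmn⟩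
  by_contra! har
  have hba : b ≤ a * max (a * r) 1 ^ κ := closure_minimal hsub hclosed ha
  rw [max_eq_right har, one_pow, mul_one] at hba
  exact hab.not_ge hba

theorem closure_subset (h : IsReturnTimeFamily Λ E v K) (hΛ : Λ.Nontrivial) (hr : 0 ≤ r)
    (hv : ∀ R > r, ∃ C, 0 < C ∧ ∀ n, v n ≤ C * R ^ n) : closure Λ ⊆ {a | 1 < a * r} := by
  intro a ha
  obtain ⟨b₀, hb₀, b₁, hb₁, hb⟩ := hΛ.exists_lt
  rcases lt_or_ge a b₁ with hab | hba
  · exact h.one_lt_mul_of_mem_closure hr hv ha hb₁ hab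
  · calc 1 < b₀ * r := h.one_lt_mul_of_mem_closure hr hv (subset_closure hb₀) hb₁ hb
      _ ≤ a * r := by gcongr; exact hb.le.trans hba

end IsReturnTimeFamily

end HittingTimes

section CommonFrequentHypercyclicity

theorem lowerDensity_setOf_one_le_norm_and_norm_le_three_pos {p : ℝ≥0∞} [Fact (1 ≤ p)]
    {T : lp (fun _ : ℕ ↦ ℂ) p →L[ℂ] lp (fun _ : ℕ ↦ ℂ) p} {x : lp (fun _ : ℕ ↦ ℂ) p}
    (hx : x ∈ FHC T) : 0 < lowerDensity {n | 1 ≤ ‖((T ^ n) x) 0‖ ∧ ‖(T ^ n) x‖ ≤ 3} := by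
  have hp : 0 < p := zero_lt_one.trans_le Fact.out
  let y : lp (fun _ : ℕ ↦ ℂ) p := lp.single p 0 2
  have hy : ‖y‖ = 2 := (lp.norm_single hp 0 _).trans Complex.norm_two
  have hy0 : ‖y 0‖ = 2 := by rw [lp.single_apply_self, Complex.norm_two]
  refine lowerDensity_pos_mono (fun n hn ↦ ?_)
    (hx (Metric.ball y 1) Metric.isOpen_ball ⟨y, Metric.mem_ball_self one_pos⟩)
  have hny : ‖y - (T ^ n) x‖ < 1 := mem_ball_iff_norm'.1 hn
  have hny0 : ‖y 0 - ((T ^ n) x) 0‖ ≤ ‖y - (T ^ n) x‖ :=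
    lp.norm_apply_le_norm hp.ne' (y - (T ^ n) x) 0
  exact ⟨by linarith [norm_sub_norm_le (y 0) (((T ^ n) x) 0)],
    by linarith [norm_le_norm_add_norm_sub y ((T ^ n) x)]⟩

namespace IsWeightedBackwardShift

variable {p : ℝ≥0∞} [Fact (1 ≤ p)]

theorem norm_pow_le {𝕜 : Type*} [NormedField 𝕜] {w : ℕ → 𝕜}
    {B : lp (fun _ : ℕ ↦ 𝕜) p →L[𝕜] lp (fun _ : ℕ ↦ 𝕜) p} (hB : IsWeightedBackwardShift w B)
    {a b : 𝕜} {x : lp (fun _ : ℕ ↦ 𝕜) p} {K : ℝ} {m n : ℕ} (hmn : m ≤ n)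
    (hn : 1 ≤ ‖(((a • B) ^ n) x) 0‖) (hm : ‖((b • B) ^ m) x‖ ≤ K) :
    ‖b‖ ^ m ≤ K * ‖a‖ ^ n * ‖weightProd w (n - m)‖ := by
  obtain ⟨i, rfl⟩ := Nat.exists_eq_add_of_le' hmn
  rw [Nat.add_sub_cancel]
  have hpow (c : 𝕜) (k i : ℕ) : ‖(((c • B) ^ k) x) i‖ * ‖weightProd w i‖ =
      ‖c‖ ^ k * (‖weightProd w (i + k)‖ * ‖x (i + k)‖) := by
    rw [smul_pow, smul_apply, lp.coeFn_smul, Pi.smul_apply, norm_smul, norm_pow, mul_assoc,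
      ← norm_mul, hB.pow_apply_mul_weightProd, norm_mul]
  have hw0 : ‖weightProd w 0‖ = 1 := norm_one
  have hcoord := hpow a (i + m) 0
  rw [hw0, mul_one, zero_add] at hcoord
  calc ‖b‖ ^ m ≤ ‖b‖ ^ m * (‖a‖ ^ (i + m) * (‖weightProd w (i + m)‖ * ‖x (i + m)‖)) :=
        le_mul_of_one_le_right (by positivity) (hn.trans_eq hcoord)
    _ = ‖a‖ ^ (i + m) * (‖(((b • B) ^ m) x) i‖ * ‖weightProd w i‖) := by rw [hpow]; ring
    _ ≤ ‖a‖ ^ (i + m) * (K * ‖weightProd w i‖) := by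
        gcongr
        exact (lp.norm_apply_le_norm (zero_lt_one.trans_le Fact.out).ne' _ i).trans hm
    _ = K * ‖a‖ ^ (i + m) * ‖weightProd w i‖ := by ring

variable {w : ℕ → ℂ} {B : lp (fun _ : ℕ ↦ ℂ) p →L[ℂ] lp (fun _ : ℕ ↦ ℂ) p} {Λ : Set ℝ}

theorem isReturnTimeFamily (hB : IsWeightedBackwardShift w B) (hΛ : Λ ⊆ Set.Ioi 0)
    {x : lp (fun _ : ℕ ↦ ℂ) p} (hx : x ∈ ⋂ l ∈ Λ, FHC ((l : ℂ) • B)) :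
    IsReturnTimeFamily Λ
      (fun l ↦ {n | 1 ≤ ‖((((l : ℂ) • B) ^ n) x) 0‖ ∧ ‖(((l : ℂ) • B) ^ n) x‖ ≤ 3})
      (‖weightProd w ·‖) 3 where
  subset_Ioi := hΛ
  nonneg := by norm_num
  lowerDensity_pos ha :=
    lowerDensity_setOf_one_le_norm_and_norm_le_three_pos (Set.mem_iInter₂.1 hx _ ha)
  pow_le ha hb hn hm hmn := by
    have := hB.norm_pow_le hmn hn.1 hm.2
    rwa [Complex.norm_of_nonneg (hΛ ha).le, Complex.norm_of_nonneg (hΛ hb).le] at this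

theorem countable_and_isCompact_closure_of_nonempty_iInter_FHC (hB : IsWeightedBackwardShift w B)
    (hw : lamw w ≠ ⊤) (hΛ : Λ ⊆ Set.Ioi 0) (hΛ₂ : Λ.Nontrivial)
    (h : (⋂ l ∈ Λ, FHC ((l : ℂ) • B)).Nonempty) :
    Λ.Countable ∧ IsCompact (closure Λ) ∧ closure Λ ⊆ {l | (lamw w)⁻¹ < ENNReal.ofReal l} := by
  obtain ⟨x, hx⟩ := h
  have hE := hB.isReturnTimeFamily hΛ hx
  have hv (R : ℝ) (hR : (lamw w).toReal < R) : ∃ C, 0 < C ∧ ∀ n, ‖weightProd w n‖ ≤ C * R ^ n := by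
    refine exists_norm_le_mul_pow_of_limsup_lt ?_
    rwa [← lamw_eq_limsup_enorm, ENNReal.lt_ofReal_iff_toReal_lt hw]
  have hbdd : Bornology.IsBounded Λ :=
    isBounded_iff_bddBelow_bddAbove.2
      ⟨bddBelow_Ioi.mono hΛ, hE.bddAbove ENNReal.toReal_nonneg hv⟩
  refine ⟨hE.countable, hbdd.isCompact_closure, fun a ha ↦ ?_⟩
  have har : 1 < a * (lamw w).toReal := hE.closure_subset hΛ₂ ENNReal.toReal_nonneg hv ha
  have ha0 : 0 ≤ a := closure_minimal (hΛ.trans Set.Ioi_subset_Ici_self) isClosed_Ici ha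
  have hr : 0 < (lamw w).toReal := pos_of_mul_pos_right (one_pos.trans har) ha0
  change (lamw w)⁻¹ < ENNReal.ofReal a
  rw [← ENNReal.ofReal_toReal hw, ← ENNReal.ofReal_inv_of_pos hr,
    ENNReal.ofReal_lt_ofReal_iff_of_nonneg (by positivity), inv_lt_iff_one_lt_mul₀ hr]
  exact har

theorem nonempty_iInter_FHC (hB : IsWeightedBackwardShift w B) (hp : p ≠ ⊤)
    (hw : ∀ n, 1 ≤ n → w n ≠ 0) (hΛ : Λ.Countable) (hΛc : IsCompact (closure Λ))
    (hΛr : closure Λ ⊆ {l | rpwInv w < ENNReal.ofReal l}) :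
    (⋂ l ∈ Λ, FHC ((l : ℂ) • B)).Nonempty := by
  obtain rfl | hne := Λ.eq_empty_or_nonempty
  · simp
  obtain ⟨α, hα, hαΛ⟩ := hΛc.exists_isLeast hne.closure
  obtain ⟨β, -, hβΛ⟩ := hΛc.exists_isGreatest hne.closure
  obtain ⟨ρ, hρ0, hρ, hρα⟩ := ENNReal.lt_iff_exists_real_btwn.1 (hΛr hα)
  rw [rpwInv_eq_limsup_enorm hw] at hρ
  replace hρα := (ENNReal.ofReal_lt_ofReal_iff_of_nonneg hρ0).1 hρα
  obtain ⟨C, -, hC⟩ := exists_norm_le_mul_pow_of_limsup_lt hρ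
  have hnorm (l : Λ) : ‖((l : ℝ) : ℂ)‖ = l :=
    Complex.norm_of_nonneg (hρ0.trans (hρα.le.trans (hαΛ (subset_closure l.2))))
  have := hΛ.to_subtype
  rw [Set.biInter_eq_iInter]
  refine nonempty_iInter_FHC_smul (β := β) (Set.countable_range _) (dense_span_range_single hp)
    (Set.forall_mem_range.2 (hB.exists_isBackwardOrbit hw hC)) hρ0 hρα (fun l ↦ ?_) (fun l ↦ ?_)
    fun l l' hl ↦ ?_
  · exact (hαΛ (subset_closure l.2)).trans_eq (hnorm l).symm
  · exact (hnorm l).trans_le (hβΛ (subset_closure l.2))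
  · simpa only [hnorm] using Subtype.coe_le_coe.2 hl

end IsWeightedBackwardShift

end CommonFrequentHypercyclicity

/-- Corollary 2.26: if `λ_w = r_{p,w}` and `Λ ⊆ (0,∞)` has at least two elements,
then the multiples `λB_w`, `λ ∈ Λ`, share a frequently hypercyclic vector if and only
if `Λ` is countable and relatively compact in `(r_{p,w}⁻¹, +∞)`. The weighted backward
shift is encoded as a bounded operator `B` with `(B x) n = w (n+1) * x (n+1)`. -/
theorem stmt12 (p : ℝ≥0∞) [Fact (1 ≤ p)] (hp : p ≠ ⊤)
    (w : ℕ → ℂ) (hw0 : ∀ n : ℕ, 1 ≤ n → w n ≠ 0)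
    (hwbdd : ∃ A : ℝ, ∀ n : ℕ, ‖w n‖ ≤ A)
    (B : lp (fun _ : ℕ => ℂ) p →L[ℂ] lp (fun _ : ℕ => ℂ) p)
    (hB : ∀ x : lp (fun _ : ℕ => ℂ) p, ∀ n : ℕ, (B x) n = w (n + 1) * x (n + 1))
    (Λ : Set ℝ) (hΛpos : Λ ⊆ Set.Ioi (0 : ℝ))
    (hΛ2 : ∃ a ∈ Λ, ∃ b ∈ Λ, a ≠ b)
    (hlr : lamw w = (rpwInv w)⁻¹) :
    (⋂ l ∈ Λ, FHC ((l : ℂ) • B)).Nonempty ↔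
      (Λ.Countable ∧ IsCompact (closure Λ) ∧
        closure Λ ⊆ {l : ℝ | rpwInv w < ENNReal.ofReal l}) := by
  have hr : (lamw w)⁻¹ = rpwInv w := by rw [hlr, inv_inv]
  have hshift : IsWeightedBackwardShift w B := hB
  obtain ⟨A, hA⟩ := hwbdd
  constructor
  · intro hne
    rw [← hr]
    exact hshift.countable_and_isCompact_closure_of_nonempty_iInter_FHC (lamw_lt_top hA).ne
      hΛpos hΛ2 hne
  · rintro ⟨hcountable, hcompact, hclosure⟩
    exact hshift.nonempty_iInter_FHC hp hw0 hcountable hcompact hclosure
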